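/- For every complex number q with 0 < |q| < 1, one has ∑_{i,j,k,l ≥ 0} q^{i²+j²+k²+l²+il−jl−kl+l} / ((q²;q²)_i (q²;q²)_j (q²;q²)_k (q²;q²)_l) = J_2⁶ J_14 J_28⁵ / (J_1³ J_4³ J_{4,28} J_{5,28} J_{6,28} J_{7,28} J_{8,28} J_{9,28}) + 4q² · J_4³ J_{4,28} / J_2⁴. -/

import Mathlib

open scoped BigOperators

/-- The infinite q-Pochhammer symbol `(a; q)_∞ = ∏_{k=0}^∞ (1 - a q^k)`. -/
noncomputable def qPochInf (a q : ℂ) : ℂ := ∏' n : ℕ, (1 - a * q ^ n)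

/-- The finite q-Pochhammer symbol `(a; q)_n = ∏_{k=0}^{n-1} (1 - a q^k)`. -/
noncomputable def qPoch (a q : ℂ) (n : ℕ) : ℂ :=
  Finset.prod (Finset.range n) (fun k => 1 - a * q ^ k)

/-- `J_m = (q^m; q^m)_∞`. -/
noncomputable def J (q : ℂ) (m : ℕ) : ℂ := qPochInf (q ^ m) (q ^ m)

/-- `J_{a,m} = (q^a; q^m)_∞ (q^{m-a}; q^m)_∞ (q^m; q^m)_∞`. -/
noncomputable def Jam (q : ℂ) (a m : ℕ) : ℂ :=
  qPochInf (q ^ a) (q ^ m) * qPochInf (q ^ (m - a)) (q ^ m) * qPochInf (q ^ m) (q ^ m)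

/-!
Euler's expansion of `(z; q²)_∞` carries out the sums over `i`, `j`, `k` for fixed `l` and leaves
`(-q^{1+l}; q²)_∞ (-q^{1-l}; q²)_∞²`. Depending on the parity of `l`, reflecting the finitely many
factors with non-positive exponent reduces this to a finite symbol times `(-q; q²)_∞³` or
`4 (-q²; q²)_∞³`. The even `l` then form the Rogers–Selberg sum modulo 7 at `-q`, the odd `l`
Rogers' sum modulo 14 at `q²`.

Both sums are limits of Bailey's lemma. Each Bailey pair involved satisfies a first-order recurrence
in `n`, so that its `β` is a product, and its theta series on the `α` side is summed by the Jacobi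
triple product, itself the limit `n → ∞` of another pair of this kind.
-/

open Filter Topology Finset

section Summation

lemma tsum_prod_eq_tsum_sum_antidiagonal {A E : Type*} [AddMonoid A] [HasAntidiagonal A]
    [AddCommMonoid E] [TopologicalSpace E] [ContinuousAdd E] [T3Space E] {f : A × A → E}
    (hf : Summable f) : ∑' x, f x = ∑' n, ∑ x ∈ antidiagonal n, f x := by
  let e := HasAntidiagonal.sigmaAntidiagonalEquivProd (A := A)
  have hfe : Summable fun c ↦ f (e c) := e.summable_iff.mpr hf
  rw [← e.tsum_eq f, hfe.tsum_sigma' fun n ↦ (hasSum_fintype _).summable]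
  exact tsum_congr fun n ↦ (tsum_fintype _).trans (sum_coe_sort _ f)

variable {E : Type*} [AddCommGroup E] [UniformSpace E] [IsUniformAddGroup E] [CompleteSpace E]
  {f : ℕ → E}

lemma summable_comp_two_mul (hf : Summable f) : Summable fun k ↦ f (2 * k) :=
  hf.comp_injective fun _ _ h ↦ mul_left_cancel₀ two_ne_zero h

lemma summable_comp_two_mul_add_one (hf : Summable f) : Summable fun k ↦ f (2 * k + 1) :=
  hf.comp_injective fun _ _ h ↦ mul_left_cancel₀ two_ne_zero (Nat.succ_injective h)

lemma tsum_eq_tsum_two_mul_add [T2Space E] (hf : Summable f) :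
    ∑' n, f n = ∑' k, f (2 * k) + ∑' k, f (2 * k + 1) :=
  (tsum_even_add_odd (summable_comp_two_mul hf) (summable_comp_two_mul_add_one hf)).symm

end Summation

section QPochhammer

variable {a q : ℂ}

@[simp]
lemma qPoch_zero (a q : ℂ) : qPoch a q 0 = 1 := prod_range_zero _

lemma qPoch_succ (a q : ℂ) (n : ℕ) : qPoch a q (n + 1) = qPoch a q n * (1 - a * q ^ n) :=
  prod_range_succ _ n

lemma qPoch_ne_zero (h : ∀ k, a * q ^ k ≠ 1) (n : ℕ) : qPoch a q n ≠ 0 :=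
  prod_ne_zero_iff.mpr fun k _ ↦ sub_ne_zero.mpr (h k).symm

lemma norm_pow_lt_one (hq : ‖q‖ < 1) {n : ℕ} (hn : n ≠ 0) : ‖q ^ n‖ < 1 := by
  rw [norm_pow]
  exact pow_lt_one₀ (norm_nonneg _) hq hn

lemma mul_pow_ne_one (hq : ‖q‖ < 1) (ha : ‖a‖ < 1) (k : ℕ) : a * q ^ k ≠ 1 := by
  refine ne_of_apply_ne norm (ne_of_lt ?_)
  rw [norm_mul, norm_pow, norm_one]
  exact mul_lt_one_of_nonneg_of_lt_one_left (norm_nonneg _) ha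
    (pow_le_one₀ (norm_nonneg _) hq.le)

lemma mul_self_mul_pow_ne_one (hq : ‖q‖ < 1) (k : ℕ) : q * q * q ^ k ≠ 1 := by
  simpa only [pow_succ', mul_assoc] using mul_pow_ne_one hq hq (k + 1)

lemma summable_norm_mul_pow (a : ℂ) (hq : ‖q‖ < 1) : Summable fun n : ℕ ↦ ‖-(a * q ^ n)‖ := by
  simpa only [norm_neg, norm_mul] using ((summable_norm_geometric_of_norm_lt_one hq).mul_left ‖a‖)

lemma multipliable_one_sub_mul_pow (a : ℂ) (hq : ‖q‖ < 1) :
    Multipliable fun n : ℕ ↦ 1 - a * q ^ n := by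
  simpa only [sub_eq_add_neg] using multipliable_one_add_of_summable (summable_norm_mul_pow a hq)

lemma qPochInf_ne_zero (hq : ‖q‖ < 1) (h : ∀ k, a * q ^ k ≠ 1) : qPochInf a q ≠ 0 := by
  have := tprod_one_add_ne_zero_of_summable (f := fun n : ℕ ↦ -(a * q ^ n))
    (fun k ↦ by simpa only [← sub_eq_add_neg] using sub_ne_zero.mpr (h k).symm)
    (summable_norm_mul_pow a hq)
  simpa only [qPochInf, sub_eq_add_neg] using this

lemma tendsto_qPoch (a : ℂ) (hq : ‖q‖ < 1) :
    Tendsto (qPoch a q) atTop (𝓝 (qPochInf a q)) :=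
  (multipliable_one_sub_mul_pow a hq).hasProd.tendsto_prod_nat

lemma exists_norm_inv_qPoch_le (hq : ‖q‖ < 1) (h : ∀ k, a * q ^ k ≠ 1) :
    ∃ C : ℝ, 0 < C ∧ ∀ n, ‖(qPoch a q n)⁻¹‖ ≤ C := by
  obtain ⟨C, hC, hle⟩ := (Metric.isBounded_range_of_tendsto _
    ((tendsto_qPoch a hq).inv₀ (qPochInf_ne_zero hq h))).exists_pos_norm_le
  exact ⟨C, hC, fun n ↦ hle _ ⟨n, rfl⟩⟩

lemma summable_norm_div_qPoch (hq : ‖q‖ < 1) (h : ∀ k, a * q ^ k ≠ 1) {f : ℕ → ℂ}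
    (hf : Summable fun n ↦ ‖f n‖) : Summable fun n ↦ ‖f n / qPoch a q n‖ := by
  obtain ⟨C, -, hC⟩ := exists_norm_inv_qPoch_le hq h
  refine (hf.mul_right C).of_nonneg_of_le (fun n ↦ norm_nonneg _) fun n ↦ ?_
  rw [div_eq_mul_inv, norm_mul]
  gcongr
  exact hC n

lemma qPochInf_eq_qPoch_mul (a : ℂ) (hq : ‖q‖ < 1) (n : ℕ) :
    qPochInf a q = qPoch a q n * qPochInf (a * q ^ n) q := by
  have hshift (k : ℕ) : 1 - a * q ^ n * q ^ k = 1 - a * q ^ (k + n) := by ring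
  simp only [qPochInf, qPoch, hshift]
  refine (Multipliable.prod_mul_tprod_nat_mul' ?_).symm
  simpa only [hshift] using multipliable_one_sub_mul_pow (a * q ^ n) hq

lemma qPochInf_eq_one_sub_mul (a : ℂ) (hq : ‖q‖ < 1) :
    qPochInf a q = (1 - a) * qPochInf (a * q) q := by
  simpa [qPoch_succ] using qPochInf_eq_qPoch_mul a hq 1

lemma qPochInf_mul_qPochInf_neg (a : ℂ) (hq : ‖q‖ < 1) :
    qPochInf a q * qPochInf (-a) q = qPochInf (a ^ 2) (q ^ 2) := by
  rw [qPochInf, qPochInf, ← Multipliable.tprod_mul (multipliable_one_sub_mul_pow _ hq)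
    (multipliable_one_sub_mul_pow _ hq)]
  exact tprod_congr fun k ↦ by ring

lemma qPochInf_eq_prod_residues (a : ℂ) (hq : ‖q‖ < 1) (m : ℕ) [NeZero m] :
    qPochInf a q = ∏ i ∈ range m, qPochInf (a * q ^ i) (q ^ m) := by
  obtain ⟨e, he⟩ : ∃ e : Fin m × ℕ ≃ ℕ, ∀ i k, e (i, k) = k * m + i :=
    ⟨(Equiv.prodComm _ _).trans (Nat.divModEquiv m).symm, fun i k ↦ rfl⟩
  have hterm (i : Fin m) (k : ℕ) :
      1 - a * q ^ e (i, k) = 1 - a * q ^ (i : ℕ) * (q ^ m) ^ k := by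
    rw [he]
    ring
  have hfiber (i : Fin m) : Multipliable fun k ↦ 1 - a * q ^ e (i, k) := by
    simpa only [hterm] using
      multipliable_one_sub_mul_pow _ (norm_pow_lt_one hq (NeZero.ne m))
  have hprod : Multipliable fun x ↦ 1 - a * q ^ e x :=
    e.multipliable_iff.mpr (multipliable_one_sub_mul_pow a hq)
  rw [qPochInf, ← e.tprod_eq, hprod.tprod_prod' hfiber, tprod_fintype, prod_range]
  simp only [hterm, qPochInf]

lemma qPochInf_eq_mul_sq (a : ℂ) (hq : ‖q‖ < 1) :
    qPochInf a q = qPochInf a (q ^ 2) * qPochInf (a * q) (q ^ 2) := by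
  simpa [prod_range_succ] using qPochInf_eq_prod_residues a hq 2

lemma qPoch_mul_qPoch_sq_mul_qPoch_neg (p : ℂ) (n : ℕ) :
    qPoch p (p ^ 2) n * (qPoch (p ^ 2) (p ^ 2) n * qPoch (-p) p (2 * n)) =
      qPoch (p ^ 2) (p ^ 2) (2 * n) := by
  induction n with
  | zero => simp
  | succ n ih =>
    simp only [mul_add, mul_one, qPoch_succ, ← ih]
    ring

lemma qPoch_mul_qPoch_odd_mul_qPoch_neg (q : ℂ) (n : ℕ) :
    qPoch q q n * qPoch q (q ^ 2) (n + 1) * qPoch (-q) q n = qPoch q q (2 * n + 1) := by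
  induction n with
  | zero => simp [qPoch_succ]
  | succ n ih =>
    rw [qPoch_succ _ _ (n + 1), show 2 * (n + 1) + 1 = 2 * n + 1 + 1 + 1 by ring,
      qPoch_succ _ _ (2 * n + 1 + 1), qPoch_succ _ _ (2 * n + 1), ← ih]
    simp only [qPoch_succ _ _ n]
    ring

end QPochhammer

section ThetaTerm

variable {q z : ℂ}

/-- The term `(-1)ⁿ zⁿ q^{n(n-1)/2}` of a (partial) theta series. -/
noncomputable def thetaTerm (z q : ℂ) (n : ℕ) : ℂ := (-z) ^ n * q ^ n.choose 2

@[simp]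
lemma thetaTerm_zero (z q : ℂ) : thetaTerm z q 0 = 1 := by simp [thetaTerm]

lemma thetaTerm_succ (z q : ℂ) (n : ℕ) :
    thetaTerm z q (n + 1) = -(z * q ^ n) * thetaTerm z q n := by
  rw [thetaTerm, thetaTerm, Nat.choose_succ_succ' n 1, Nat.choose_one_right]
  ring

lemma thetaTerm_mul_left (x z q : ℂ) (n : ℕ) :
    thetaTerm (x * z) q n = x ^ n * thetaTerm z q n := by
  rw [thetaTerm, thetaTerm, ← mul_neg, mul_pow, mul_assoc]

lemma thetaTerm_add (z q : ℂ) (n k : ℕ) :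
    thetaTerm z q (n + k) = thetaTerm z q n * thetaTerm (q ^ n * z) q k := by
  induction k with
  | zero => simp
  | succ k ih =>
    rw [← add_assoc, thetaTerm_succ, thetaTerm_succ, ih]
    ring

lemma pow_mul_thetaTerm (x y z q : ℂ) (n : ℕ) :
    x ^ n * y ^ n ^ 2 * thetaTerm z q n = thetaTerm (x * y * z) (y ^ 2 * q) n := by
  induction n with
  | zero => simp
  | succ n ih =>
    rw [thetaTerm_succ, thetaTerm_succ, ← ih]
    ring

lemma thetaTerm_neg_mul_sq (x y : ℂ) (n : ℕ) :
    thetaTerm (-(x * y)) (y ^ 2) n = x ^ n * y ^ n ^ 2 := by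
  induction n with
  | zero => simp
  | succ n ih =>
    rw [thetaTerm_succ, ih]
    ring

lemma summable_norm_thetaTerm (z : ℂ) (hq : ‖q‖ < 1) : Summable fun n ↦ ‖thetaTerm z q n‖ := by
  have hratio : Tendsto (fun n : ℕ ↦ ‖-(z * q ^ n)‖) atTop (𝓝 0) := by
    simpa using ((tendsto_pow_atTop_nhds_zero_of_norm_lt_one hq).const_mul z).norm
  refine summable_of_ratio_norm_eventually_le (r := 1 / 2) (by norm_num) ?_
  filter_upwards [hratio.eventually_le_const (by norm_num : (0 : ℝ) < 1 / 2)] with n hn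
  rw [norm_norm, norm_norm, thetaTerm_succ, norm_mul]
  gcongr

lemma summable_norm_pow_mul_pow_sq (z : ℂ) (hq : ‖q‖ < 1) :
    Summable fun n ↦ ‖z ^ n * q ^ n ^ 2‖ := by
  simpa only [thetaTerm_neg_mul_sq] using
    summable_norm_thetaTerm (-(z * q)) (norm_pow_lt_one hq two_ne_zero)

lemma thetaTerm_mul_thetaTerm_one (z q : ℂ) (n : ℕ) :
    thetaTerm (z * q) q n * thetaTerm 1 q n = z ^ n * q ^ n ^ 2 := by
  induction n with
  | zero => simp
  | succ n ih =>
    rw [thetaTerm_succ, thetaTerm_succ, mul_mul_mul_comm, ih]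
    ring

/-- The term of Euler's expansion of `(z; q)_∞` in powers of `z`. -/
noncomputable def eulerTerm (z q : ℂ) (n : ℕ) : ℂ := thetaTerm z q n / qPoch q q n

@[simp]
lemma eulerTerm_zero (z q : ℂ) : eulerTerm z q 0 = 1 := by simp [eulerTerm]

lemma eulerTerm_mul_left (x z q : ℂ) (n : ℕ) : eulerTerm (x * z) q n = x ^ n * eulerTerm z q n := by
  rw [eulerTerm, thetaTerm_mul_left, eulerTerm, mul_div_assoc]

lemma summable_norm_eulerTerm (z : ℂ) (hq : ‖q‖ < 1) :
    Summable fun n ↦ ‖eulerTerm z q n‖ :=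
  summable_norm_div_qPoch hq (mul_pow_ne_one hq hq) (summable_norm_thetaTerm z hq)

lemma tsum_eulerTerm_eq_one_sub_mul (z : ℂ) (hq : ‖q‖ < 1) :
    ∑' n, eulerTerm z q n = (1 - z) * ∑' n, eulerTerm (z * q) q n := by
  have hz := (summable_norm_eulerTerm z hq).of_norm
  have hzq := (summable_norm_eulerTerm (z * q) hq).of_norm
  have hterm (n : ℕ) :
      eulerTerm z q (n + 1) - eulerTerm (z * q) q (n + 1) = -z * eulerTerm (z * q) q n := by
    have hn := qPoch_ne_zero (mul_pow_ne_one hq hq) n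
    have hn1 : 1 - q * q ^ n ≠ 0 := sub_ne_zero.mpr (mul_pow_ne_one hq hq n).symm
    simp only [eulerTerm, mul_comm z q, thetaTerm_mul_left, thetaTerm_succ, qPoch_succ]
    rw [← sub_div, mul_div_assoc', div_eq_div_iff (mul_ne_zero hn hn1) hn]
    ring
  have hdiff : ∑' n, (eulerTerm z q n - eulerTerm (z * q) q n) =
      -z * ∑' n, eulerTerm (z * q) q n := by
    rw [(hz.sub hzq).tsum_eq_zero_add, ← tsum_mul_left]
    simp only [hterm, eulerTerm_zero, sub_self, zero_add]
  rw [hz.tsum_sub hzq] at hdiff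
  linear_combination hdiff

lemma tendsto_tsum_eulerTerm_mul_pow (z : ℂ) (hq : ‖q‖ < 1) :
    Tendsto (fun m : ℕ ↦ ∑' n, eulerTerm (z * q ^ m) q n) atTop (𝓝 1) := by
  have hpow : Tendsto (fun m : ℕ ↦ q ^ m) atTop (𝓝 0) :=
    tendsto_pow_atTop_nhds_zero_of_norm_lt_one hq
  have hlim : Tendsto (fun m : ℕ ↦ ∑' n, eulerTerm (z * q ^ m) q n) atTop
      (𝓝 (∑' n, (0 : ℂ) ^ n * eulerTerm z q n)) := by
    simp only [mul_comm z, eulerTerm_mul_left]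
    refine tendsto_tsum_of_dominated_convergence (summable_norm_eulerTerm z hq)
      (fun n ↦ (hpow.pow n).mul_const _) (Eventually.of_forall fun m n ↦ ?_)
    rw [norm_mul]
    refine mul_le_of_le_one_left (norm_nonneg _) ?_
    rw [norm_pow, norm_pow]
    exact pow_le_one₀ (by positivity) (pow_le_one₀ (norm_nonneg _) hq.le)
  rwa [tsum_eq_single 0 fun n hn ↦ by rw [zero_pow hn, zero_mul], pow_zero, one_mul,
    eulerTerm_zero] at hlim

theorem tsum_eulerTerm (z : ℂ) (hq : ‖q‖ < 1) : ∑' n, eulerTerm z q n = qPochInf z q := by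
  have hiter (m : ℕ) :
      ∑' n, eulerTerm z q n = qPoch z q m * ∑' n, eulerTerm (z * q ^ m) q n := by
    induction m with
    | zero => simp
    | succ m ih =>
      rw [ih, tsum_eulerTerm_eq_one_sub_mul (z * q ^ m) hq, qPoch_succ, pow_succ]
      ring_nf
  have hlim := (tendsto_qPoch z hq).mul (tendsto_tsum_eulerTerm_mul_pow z hq)
  simp only [← hiter, mul_one] at hlim
  exact tendsto_nhds_unique tendsto_const_nhds hlim

lemma qPochInf_mul_inv_pow_mul_thetaTerm {a b q : ℂ} (hq : ‖q‖ < 1) (hq0 : q ≠ 0)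
    (hab : a * b = q) (m : ℕ) :
    qPochInf (a * (q ^ m)⁻¹) q * thetaTerm b q m = qPoch b q m * qPochInf a q := by
  induction m with
  | zero => simp
  | succ m ih =>
    have hstep : a * (q ^ (m + 1))⁻¹ * q = a * (q ^ m)⁻¹ := by field_simp; ring
    have hfactor : (1 - a * (q ^ (m + 1))⁻¹) * -(b * q ^ m) = 1 - b * q ^ m := by
      field_simp
      linear_combination q ^ m * hab
    rw [qPochInf_eq_one_sub_mul _ hq, hstep, thetaTerm_succ, qPoch_succ]
    linear_combination
      (1 - b * q ^ m) * ih + qPochInf (a * (q ^ m)⁻¹) q * thetaTerm b q m * hfactor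

lemma qPochInf_mul_pow_mul_qPochInf_mul_inv_pow_sq {a b q : ℂ} (hq : ‖q‖ < 1) (hq0 : q ≠ 0)
    (hab : a * b = q) (m : ℕ) :
    qPochInf (b * q ^ m) q * (qPochInf (a * (q ^ m)⁻¹) q * thetaTerm b q m) ^ 2 =
      qPoch b q m * qPochInf b q * qPochInf a q ^ 2 := by
  rw [qPochInf_mul_inv_pow_mul_thetaTerm hq hq0 hab, qPochInf_eq_qPoch_mul b hq m]
  ring

end ThetaTerm

section Bailey

variable {a q : ℂ} {α : ℕ → ℂ}

lemma sum_antidiagonal_thetaTerm_div_qPoch (h : ∀ k, q * q ^ k ≠ 1) {N : ℕ} (hN : N ≠ 0) :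
    ∑ x ∈ antidiagonal N, thetaTerm 1 q x.1 / (qPoch q q x.1 * qPoch q q x.2) = 0 := by
  obtain ⟨N, rfl⟩ := Nat.exists_eq_add_one_of_ne_zero hN
  rw [Nat.sum_antidiagonal_eq_sum_range_succ
    fun n k ↦ thetaTerm 1 q n / (qPoch q q n * qPoch q q k)]
  set t : ℕ → ℂ := fun n ↦ thetaTerm 1 q n / (qPoch q q n * qPoch q q (N + 1 - n)) with ht
  have htelescope (n : ℕ) (hn : n ∈ range (N + 1)) :
      (1 - q ^ (N + 1)) * t n = -(1 - q ^ (n + 1)) * t (n + 1) - -(1 - q ^ n) * t n := by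
    obtain ⟨k, rfl⟩ := Nat.exists_eq_add_of_le (Nat.lt_succ_iff.mp (mem_range.mp hn))
    have hn := qPoch_ne_zero h n
    have hk := qPoch_ne_zero h k
    have hn1 := sub_ne_zero.mpr (h n).symm
    have hk1 := sub_ne_zero.mpr (h k).symm
    simp only [ht, show n + k + 1 - n = k + 1 by lia, show n + k + 1 - (n + 1) = k by lia,
      thetaTerm_succ, qPoch_succ, pow_succ', pow_add]
    field_simp
    ring
  have hN1 : 1 - q ^ (N + 1) ≠ 0 := by
    simpa only [pow_succ'] using sub_ne_zero.mpr (h N).symm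
  refine (mul_eq_zero.mp ?_).resolve_left hN1
  rw [mul_sum, sum_range_succ, sum_congr rfl htelescope,
    sum_range_sub fun n ↦ -(1 - q ^ n) * t n, pow_zero]
  ring

lemma tsum_pow_mul_pow_sq_div_qPoch_mul_qPochInf (z : ℂ) (hq : ‖q‖ < 1) :
    ∑' n, z ^ n * q ^ n ^ 2 / qPoch q q n * qPochInf (z * q ^ (n + 1)) q = 1 := by
  have hne := mul_pow_ne_one hq hq
  let f : ℕ × ℕ → ℂ := fun x ↦
    z ^ x.1 * q ^ x.1 ^ 2 / qPoch q q x.1 * eulerTerm (q ^ x.1 * (z * q)) q x.2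
  have hsq : Summable fun n ↦ ‖z ^ n * q ^ n ^ 2 / qPoch q q n‖ :=
    summable_norm_div_qPoch hq hne (summable_norm_pow_mul_pow_sq z hq)
  have hf : Summable f := by
    refine (hsq.mul_of_nonneg (summable_norm_eulerTerm (z * q) hq) (fun n ↦ norm_nonneg _)
      fun n ↦ norm_nonneg _).of_norm_bounded fun x ↦ ?_
    rw [norm_mul, eulerTerm_mul_left, norm_mul, norm_pow, norm_pow]
    gcongr
    exact mul_le_of_le_one_left (norm_nonneg _)
      (pow_le_one₀ (by positivity) (pow_le_one₀ (norm_nonneg _) hq.le))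
  have hantidiagonal (N : ℕ) : ∑ x ∈ antidiagonal N, f x =
      thetaTerm (z * q) q N *
        ∑ x ∈ antidiagonal N, thetaTerm 1 q x.1 / (qPoch q q x.1 * qPoch q q x.2) := by
    rw [mul_sum]
    refine sum_congr rfl fun x hx ↦ ?_
    rw [← mem_antidiagonal.mp hx, thetaTerm_add]
    simp only [f, eulerTerm, ← thetaTerm_mul_thetaTerm_one]
    ring
  calc ∑' n, z ^ n * q ^ n ^ 2 / qPoch q q n * qPochInf (z * q ^ (n + 1)) q
      = ∑' x, f x := by
        rw [hf.tsum_prod]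
        refine tsum_congr fun n ↦ ?_
        simp only [f]
        rw [tsum_mul_left, tsum_eulerTerm _ hq, mul_left_comm, ← pow_succ]
    _ = ∑' N, ∑ x ∈ antidiagonal N, f x := tsum_prod_eq_tsum_sum_antidiagonal hf
    _ = 1 := by
        rw [tsum_eq_single 0 fun N hN ↦ by
          rw [hantidiagonal, sum_antidiagonal_thetaTerm_div_qPoch hne hN, mul_zero]]
        simp [f]

lemma tsum_div_qPoch_mul_qPoch (hq : ‖q‖ < 1) (h : ∀ k, a * q * q ^ k ≠ 1) (N : ℕ) :
    ∑' m, (a * q ^ N) ^ m * q ^ m ^ 2 / (qPoch q q m * qPoch (a * q) q (m + N)) =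
      (qPochInf (a * q) q)⁻¹ := by
  rw [← one_mul (qPochInf _ _)⁻¹, ← tsum_pow_mul_pow_sq_div_qPoch_mul_qPochInf (a * q ^ N) hq,
    ← tsum_mul_right]
  refine tsum_congr fun m ↦ ?_
  have htail : a * q * q ^ (m + N) = a * q ^ N * q ^ (m + 1) := by ring
  have hsplit := qPochInf_eq_qPoch_mul (a * q) hq (m + N)
  have hne := qPochInf_ne_zero hq h
  rw [htail] at hsplit
  rw [hsplit] at hne ⊢
  have := left_ne_zero_of_mul hne
  have := right_ne_zero_of_mul hne
  field_simp

/-- The sequence `β` such that `(α, β)` is a Bailey pair relative to `a`. -/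
noncomputable def baileyBeta (a q : ℂ) (α : ℕ → ℂ) (n : ℕ) : ℂ :=
  ∑ r ∈ range (n + 1), α r / (qPoch q q (n - r) * qPoch (a * q) q (n + r))

lemma summable_mul_div_qPoch_mul_qPoch (hq : ‖q‖ < 1) (h : ∀ k, a * q * q ^ k ≠ 1) {f : ℕ → ℂ}
    (hf : Summable fun r ↦ ‖f r‖) :
    Summable fun x : ℕ × ℕ ↦ f x.1 * ((a * q ^ (2 * x.1)) ^ x.2 * q ^ x.2 ^ 2 /
      (qPoch q q x.2 * qPoch (a * q) q (x.2 + 2 * x.1))) := by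
  have hsq : Summable fun m ↦ ‖a ^ m * q ^ m ^ 2 / qPoch q q m‖ :=
    summable_norm_div_qPoch hq (mul_pow_ne_one hq hq) (summable_norm_pow_mul_pow_sq a hq)
  obtain ⟨C, -, hC⟩ := exists_norm_inv_qPoch_le hq h
  refine ((hf.mul_of_nonneg hsq (fun r ↦ norm_nonneg _)
    fun m ↦ norm_nonneg _).mul_right C).of_norm_bounded fun x ↦ ?_
  have hpow : ‖(q ^ (2 * x.1)) ^ x.2‖ ≤ 1 := by
    rw [norm_pow, norm_pow]
    exact pow_le_one₀ (by positivity) (pow_le_one₀ (norm_nonneg _) hq.le)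
  calc ‖f x.1 * ((a * q ^ (2 * x.1)) ^ x.2 * q ^ x.2 ^ 2 /
        (qPoch q q x.2 * qPoch (a * q) q (x.2 + 2 * x.1)))‖
      = ‖f x.1 * (a ^ x.2 * q ^ x.2 ^ 2 / qPoch q q x.2) *
          ((q ^ (2 * x.1)) ^ x.2 * (qPoch (a * q) q (x.2 + 2 * x.1))⁻¹)‖ := by
        congr 1
        ring
    _ ≤ ‖f x.1‖ * ‖a ^ x.2 * q ^ x.2 ^ 2 / qPoch q q x.2‖ * C := by
        rw [norm_mul, norm_mul, norm_mul (_ ^ x.2)]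
        gcongr
        exact (mul_le_of_le_one_left (norm_nonneg _) hpow).trans (hC _)

theorem tsum_mul_baileyBeta (hq : ‖q‖ < 1) (h : ∀ k, a * q * q ^ k ≠ 1)
    (hα : Summable fun r ↦ ‖a ^ r * q ^ r ^ 2 * α r‖) :
    ∑' n, a ^ n * q ^ n ^ 2 * baileyBeta a q α n =
      (∑' r, a ^ r * q ^ r ^ 2 * α r) / qPochInf (a * q) q := by
  have hf := summable_mul_div_qPoch_mul_qPoch hq h hα
  set f : ℕ × ℕ → ℂ := fun x ↦ a ^ x.1 * q ^ x.1 ^ 2 * α x.1 *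
    ((a * q ^ (2 * x.1)) ^ x.2 * q ^ x.2 ^ 2 /
      (qPoch q q x.2 * qPoch (a * q) q (x.2 + 2 * x.1))) with hf_def
  calc ∑' n, a ^ n * q ^ n ^ 2 * baileyBeta a q α n
      = ∑' n, ∑ x ∈ antidiagonal n, f x := by
        refine tsum_congr fun n ↦ ?_
        rw [Nat.sum_antidiagonal_eq_sum_range_succ_mk, baileyBeta, mul_sum]
        refine sum_congr rfl fun r hr ↦ ?_
        obtain ⟨m, rfl⟩ := Nat.exists_eq_add_of_le (Nat.lt_succ_iff.mp (mem_range.mp hr))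
        simp only [hf_def, Nat.add_sub_cancel_left, show m + 2 * r = r + m + r by ring]
        ring
    _ = ∑' x, f x := (tsum_prod_eq_tsum_sum_antidiagonal hf).symm
    _ = (∑' r, a ^ r * q ^ r ^ 2 * α r) / qPochInf (a * q) q := by
        rw [hf.tsum_prod, div_eq_mul_inv, ← tsum_mul_right]
        refine tsum_congr fun r ↦ ?_
        simp only [hf_def]
        rw [tsum_mul_left, tsum_div_qPoch_mul_qPoch hq h]

theorem tendsto_baileyBeta (hq : ‖q‖ < 1) (h : ∀ k, a * q * q ^ k ≠ 1)
    (hα : Summable fun r ↦ ‖α r‖) :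
    Tendsto (baileyBeta a q α) atTop
      (𝓝 ((∑' r, α r) / (qPochInf q q * qPochInf (a * q) q))) := by
  have hne := mul_pow_ne_one hq hq
  obtain ⟨C, hC0, hC⟩ := exists_norm_inv_qPoch_le hq hne
  obtain ⟨D, hD0, hD⟩ := exists_norm_inv_qPoch_le hq h
  let f (n r : ℕ) : ℂ :=
    if r ∈ range (n + 1) then α r / (qPoch q q (n - r) * qPoch (a * q) q (n + r)) else 0
  have hf (n : ℕ) : baileyBeta a q α n = ∑' r, f n r := by
    rw [tsum_eq_sum fun r hr ↦ if_neg hr]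
    exact sum_congr rfl fun r hr ↦ (if_pos hr).symm
  rw [funext hf, ← tsum_div_const]
  refine tendsto_tsum_of_dominated_convergence (hα.mul_right (C * D)) (fun r ↦ ?_)
    (Eventually.of_forall fun n r ↦ ?_)
  · have hlim := ((tendsto_qPoch q hq).comp (tendsto_sub_atTop_nat r)).mul
      ((tendsto_qPoch (a * q) hq).comp (tendsto_add_atTop_nat r))
    refine (tendsto_const_nhds.div hlim
      (mul_ne_zero (qPochInf_ne_zero hq hne) (qPochInf_ne_zero hq h))).congr' ?_
    filter_upwards [eventually_ge_atTop r] with n hn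
    exact (if_pos (mem_range.mpr (Nat.lt_succ_of_le hn))).symm
  · simp only [f]
    split_ifs
    · rw [div_eq_mul_inv, mul_inv, norm_mul, norm_mul]
      gcongr
      exacts [hC _, hD _]
    · rw [norm_zero]
      positivity

lemma mul_div_qPoch_sub_mul_div_qPoch (h : ∀ k, q * q ^ k ≠ 1) (ha : ∀ k, a * q * q ^ k ≠ 1)
    {c d x u v : ℂ} {m n : ℕ}
    (huv : c * x - d * x * (1 - q ^ (m + 1)) * (1 - a * q ^ (n + 1)) =
      u * (1 - q ^ (m + 1)) - v * (1 - a * q ^ (n + 1))) :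
    c * (x / (qPoch q q (m + 1) * qPoch (a * q) q (n + 1))) -
        d * (x / (qPoch q q m * qPoch (a * q) q n)) =
      u / (qPoch q q m * qPoch (a * q) q (n + 1)) -
        v / (qPoch q q (m + 1) * qPoch (a * q) q n) := by
  have hm := qPoch_ne_zero h m
  have hn := qPoch_ne_zero ha n
  have hm1 := sub_ne_zero.mpr (h m).symm
  have hn1 := sub_ne_zero.mpr (ha n).symm
  rw [pow_succ', pow_succ', ← mul_assoc a] at huv
  rw [qPoch_succ, qPoch_succ]
  generalize 1 - q * q ^ m = y, 1 - a * q * q ^ n = z at hm1 hn1 huv ⊢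
  field_simp
  linear_combination huv

-- Creative telescoping: `g` plays the role of the q-Zeilberger certificate of the recurrence.
lemma mul_baileyBeta_succ_eq (h : ∀ k, q * q ^ k ≠ 1) (ha : ∀ k, a * q * q ^ k ≠ 1)
    {c d : ℂ} {n : ℕ} (g : ℕ → ℕ → ℂ) (hg_zero : g 0 (n + 1) = 0)
    (hg : ∀ r m, r + m = n →
      c * α r - d * α r * (1 - q ^ (m + 1)) * (1 - a * q ^ (n + r + 1)) =
        g (r + 1) m * (1 - q ^ (m + 1)) - g r (m + 1) * (1 - a * q ^ (n + r + 1)))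
    (hg_last : c * α (n + 1) = -g (n + 1) 0 * (1 - a * q ^ (n + (n + 1) + 1))) :
    c * baileyBeta a q α (n + 1) = d * baileyBeta a q α n := by
  let G (r : ℕ) : ℂ := g r (n + 1 - r) / (qPoch q q (n + 1 - r) * qPoch (a * q) q (n + r))
  have htelescope (r : ℕ) (hr : r ∈ range (n + 1)) :
      c * (α r / (qPoch q q (n + 1 - r) * qPoch (a * q) q (n + 1 + r))) -
        d * (α r / (qPoch q q (n - r) * qPoch (a * q) q (n + r))) = G (r + 1) - G r := by
    obtain ⟨m, rfl⟩ := Nat.exists_eq_add_of_le (Nat.lt_succ_iff.mp (mem_range.mp hr))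
    simp only [G, show r + m + 1 - r = m + 1 by lia, show r + m + 1 - (r + 1) = m by lia,
      show r + m - r = m by lia, show r + m + 1 + r = r + m + r + 1 by ring,
      show r + m + (r + 1) = r + m + r + 1 by ring]
    exact mul_div_qPoch_sub_mul_div_qPoch h ha (hg r m rfl)
  have hlast : c * (α (n + 1) / (qPoch q q 0 * qPoch (a * q) q (n + 1 + (n + 1)))) =
      -G (n + 1) := by
    have hn := qPoch_ne_zero ha (n + (n + 1))
    have hn1 := sub_ne_zero.mpr (ha (n + (n + 1))).symm
    rw [pow_succ', ← mul_assoc a] at hg_last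
    simp only [G, Nat.sub_self, show n + 1 + (n + 1) = n + (n + 1) + 1 by ring, qPoch_succ,
      qPoch_zero]
    field_simp
    linear_combination hg_last
  rw [baileyBeta, baileyBeta, sum_range_succ, mul_add, ← sub_eq_zero, mul_sum, mul_sum,
    Nat.sub_self, hlast, add_sub_right_comm, ← sum_sub_distrib, sum_congr rfl htelescope,
    sum_range_sub]
  simp [G, hg_zero]

end Bailey

section BaileyPairs

/-- The sequence `α` of the Bailey pair relative to `p²`, in base `p²`, behind the Rogers–Selberg
identity. -/
noncomputable def rogersSelbergAlpha (p : ℂ) (r : ℕ) : ℂ :=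
  thetaTerm p (p ^ 3) r * (1 - p ^ (4 * r + 2))

lemma mul_baileyBeta_rogersSelbergAlpha_succ {p : ℂ} (hp : ‖p‖ < 1) (n : ℕ) :
    (1 - p ^ (2 * n + 2)) * (1 + p ^ (2 * n + 1)) * (1 + p ^ (2 * n + 2)) *
        baileyBeta (p ^ 2) (p ^ 2) (rogersSelbergAlpha p) (n + 1) =
      baileyBeta (p ^ 2) (p ^ 2) (rogersSelbergAlpha p) n := by
  have hp2 := norm_pow_lt_one hp two_ne_zero
  rw [← one_mul (baileyBeta _ _ _ n)]
  refine mul_baileyBeta_succ_eq (mul_pow_ne_one hp2 hp2) (mul_self_mul_pow_ne_one hp2)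
    (fun r m ↦ thetaTerm p (p ^ 3) r *
      ((p ^ r - 1) * ((p ^ n) ^ 2 * p - (p ^ n) ^ 4 * p ^ 4) - (p ^ m) ^ 2 -
        (p ^ n) ^ 3 * p ^ 2 * p ^ m + (p ^ n) ^ 4 * p ^ 3 * (p ^ r) ^ 2 +
        (p ^ n) ^ 2 * p ^ 2 * (p ^ r) ^ 3)) ?_ ?_ ?_
  · rw [thetaTerm_zero]
    ring
  · rintro r m rfl
    simp only [rogersSelbergAlpha, thetaTerm_succ]
    ring
  · simp only [rogersSelbergAlpha, thetaTerm_succ]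
    ring

lemma baileyBeta_rogersSelbergAlpha {p : ℂ} (hp : ‖p‖ < 1) (n : ℕ) :
    baileyBeta (p ^ 2) (p ^ 2) (rogersSelbergAlpha p) n =
      (1 - p ^ 2) / (qPoch (p ^ 2) (p ^ 2) n * qPoch (-p) p (2 * n)) := by
  have hp2 := norm_pow_lt_one hp two_ne_zero
  have hsq := mul_pow_ne_one hp2 hp2
  have hneg := mul_pow_ne_one hp ((norm_neg p).trans_lt hp)
  rw [eq_div_iff (mul_ne_zero (qPoch_ne_zero hsq n) (qPoch_ne_zero hneg (2 * n)))]
  induction n with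
  | zero => simp [baileyBeta, rogersSelbergAlpha]
  | succ n ih =>
    rw [← ih, ← mul_baileyBeta_rogersSelbergAlpha_succ hp n, mul_add,
      mul_one, qPoch_succ, qPoch_succ _ _ (2 * n + 1), qPoch_succ _ _ (2 * n)]
    ring

/-- The sequence `α` of a Bailey pair relative to `ab`, in base `ab`, whose sum is the bilateral
theta series `∑ (-b)ʳ (ab)^{r(r-1)/2}` of the Jacobi triple product, with the terms of index `r`
and `-1 - r` paired. -/
noncomputable def jacobiAlpha (a b : ℂ) (r : ℕ) : ℂ :=
  thetaTerm b (a * b) r * (1 - a ^ (2 * r + 1))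

lemma mul_baileyBeta_jacobiAlpha_succ {a b : ℂ} (hab : ‖a * b‖ < 1) (n : ℕ) :
    (1 - (a * b) ^ (2 * n + 2)) * (1 - (a * b) ^ (2 * n + 3)) *
        baileyBeta (a * b) (a * b) (jacobiAlpha a b) (n + 1) =
      (1 - a * (a * b) ^ (n + 1)) * (1 - b * (a * b) ^ n) *
        baileyBeta (a * b) (a * b) (jacobiAlpha a b) n := by
  refine mul_baileyBeta_succ_eq (mul_pow_ne_one hab hab) (mul_self_mul_pow_ne_one hab)
    (fun r m ↦ thetaTerm b (a * b) r * -((a * b) ^ m *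
      ((1 - a * (a * b) ^ (n + 1)) * (1 - (a * b) ^ r * (a ^ r) ^ 2) +
        (1 - b * (a * b) ^ n) * a * ((a * b) ^ r - (a ^ r) ^ 2)))) ?_ ?_ ?_
  · simp
  · rintro r m rfl
    simp only [jacobiAlpha, thetaTerm_succ]
    ring
  · simp only [jacobiAlpha, thetaTerm_succ]
    ring

lemma baileyBeta_jacobiAlpha {a b : ℂ} (hab : ‖a * b‖ < 1) (n : ℕ) :
    baileyBeta (a * b) (a * b) (jacobiAlpha a b) n =
      qPoch a (a * b) (n + 1) * qPoch b (a * b) n /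
        qPoch (a * b * (a * b)) (a * b) (2 * n) := by
  have hne := mul_self_mul_pow_ne_one hab
  rw [eq_div_iff (qPoch_ne_zero hne (2 * n))]
  induction n with
  | zero => simp [baileyBeta, jacobiAlpha, qPoch_succ]
  | succ n ih =>
    rw [mul_add, mul_one, qPoch_succ _ _ (2 * n + 1), qPoch_succ _ _ (2 * n),
      qPoch_succ _ _ (n + 1), qPoch_succ b _ n]
    linear_combination
      qPoch (a * b * (a * b)) (a * b) (2 * n) * mul_baileyBeta_jacobiAlpha_succ hab n +
        (1 - a * (a * b) ^ (n + 1)) * (1 - b * (a * b) ^ n) * ih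

lemma summable_norm_jacobiAlpha {a b : ℂ} (hab : ‖a * b‖ < 1) :
    Summable fun r ↦ ‖jacobiAlpha a b r‖ := by
  have hterm (r : ℕ) : jacobiAlpha a b r =
      thetaTerm b (a * b) r - a * thetaTerm (a ^ 2 * b) (a * b) r := by
    rw [jacobiAlpha, thetaTerm_mul_left]
    ring
  simp only [hterm]
  refine ((summable_norm_thetaTerm b hab).add
    ((summable_norm_thetaTerm (a ^ 2 * b) hab).mul_left ‖a‖)).of_nonneg_of_le
    (fun r ↦ norm_nonneg _) fun r ↦ ?_
  rw [← norm_mul]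
  exact norm_sub_le _ _

theorem tsum_jacobiAlpha {a b : ℂ} (hab : ‖a * b‖ < 1) :
    ∑' r, jacobiAlpha a b r =
      qPochInf a (a * b) * qPochInf b (a * b) * qPochInf (a * b) (a * b) := by
  have hne := mul_self_mul_pow_ne_one hab
  have hprod := qPochInf_ne_zero hab hne
  have hclosed := (((tendsto_qPoch a hab).comp (tendsto_add_atTop_nat 1)).mul
    (tendsto_qPoch b hab)).div ((tendsto_qPoch (a * b * (a * b)) hab).comp
      (tendsto_id.const_mul_atTop' two_pos)) hprod
  have hlim := tendsto_nhds_unique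
    (tendsto_baileyBeta hab hne (summable_norm_jacobiAlpha hab))
    (hclosed.congr fun n ↦ (baileyBeta_jacobiAlpha hab n).symm)
  rw [div_eq_div_iff (mul_ne_zero (qPochInf_ne_zero hab (mul_pow_ne_one hab hab)) hprod)
    hprod] at hlim
  refine mul_right_cancel₀ hprod ?_
  linear_combination hlim

/-- The sequence `α` of the Bailey pair relative to `q` behind Rogers' identity modulo 14. -/
noncomputable def rogersAlpha (q : ℂ) (r : ℕ) : ℂ := (-1) ^ r * thetaTerm (q ^ 6) (q ^ 6) (r / 2)

lemma rogersAlpha_two_mul (q : ℂ) (k : ℕ) :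
    rogersAlpha q (2 * k) = thetaTerm (q ^ 6) (q ^ 6) k := by
  simp [rogersAlpha]

lemma rogersAlpha_two_mul_add_one (q : ℂ) (k : ℕ) :
    rogersAlpha q (2 * k + 1) = -thetaTerm (q ^ 6) (q ^ 6) k := by
  simp [rogersAlpha, pow_succ, Nat.mul_add_div]

lemma mul_baileyBeta_rogersAlpha_succ {q : ℂ} (hq : ‖q‖ < 1) (n : ℕ) :
    (1 - q ^ (n + 1)) * (1 - q ^ (2 * n + 3)) * baileyBeta q q (rogersAlpha q) (n + 1) =
      q * baileyBeta q q (rogersAlpha q) n := by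
  let g (r m : ℕ) : ℂ := thetaTerm (q ^ 6) (q ^ 6) (r / 2) *
    if Even r then (q ^ m) ^ 2 * (q ^ r - 1)
    else 1 - q - q ^ n * q - (q ^ n) ^ 2 * q ^ 3 + q ^ m * q + q ^ n * q ^ 2 * q ^ r
  have hg_even (k m : ℕ) : g (2 * k) m =
      thetaTerm (q ^ 6) (q ^ 6) k * ((q ^ m) ^ 2 * (q ^ (2 * k) - 1)) := by
    simp [g]
  have hg_odd (k m : ℕ) : g (2 * k + 1) m = thetaTerm (q ^ 6) (q ^ 6) k *
      (1 - q - q ^ n * q - (q ^ n) ^ 2 * q ^ 3 + q ^ m * q + q ^ n * q ^ 2 * q ^ (2 * k + 1)) := by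
    simp [g, Nat.mul_add_div]
  refine mul_baileyBeta_succ_eq (mul_pow_ne_one hq hq) (mul_self_mul_pow_ne_one hq) g
    (by simp [g]) ?_ ?_
  · rintro r m rfl
    obtain ⟨k, rfl | rfl⟩ := r.even_or_odd'
    · rw [hg_even, hg_odd, rogersAlpha_two_mul]
      ring
    · rw [show 2 * k + 1 + 1 = 2 * (k + 1) by ring, hg_even, hg_odd, rogersAlpha_two_mul_add_one,
        thetaTerm_succ]
      ring
  · obtain ⟨k, hk | hk⟩ := (n + 1).even_or_odd'
    · rw [hk, hg_even, rogersAlpha_two_mul]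
      rw [← hk]
      ring
    · obtain rfl : n = 2 * k := by lia
      rw [hg_odd, rogersAlpha_two_mul_add_one]
      ring

lemma baileyBeta_rogersAlpha {q : ℂ} (hq : ‖q‖ < 1) (n : ℕ) :
    baileyBeta q q (rogersAlpha q) n =
      (1 - q) * q ^ n / (qPoch q q n * qPoch q (q ^ 2) (n + 1)) := by
  have hne := mul_pow_ne_one hq hq
  have hodd := mul_pow_ne_one (norm_pow_lt_one hq two_ne_zero) hq
  rw [eq_div_iff (mul_ne_zero (qPoch_ne_zero hne n) (qPoch_ne_zero hodd (n + 1)))]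
  induction n with
  | zero => simp [baileyBeta, rogersAlpha, qPoch_succ]
  | succ n ih =>
    rw [qPoch_succ _ _ (n + 1), qPoch_succ q q n]
    linear_combination q * ih + qPoch q q n * qPoch q (q ^ 2) (n + 1) *
      mul_baileyBeta_rogersAlpha_succ hq n

end BaileyPairs

section RogersSlater

lemma pow_mul_rogersSelbergAlpha (p : ℂ) (r : ℕ) :
    (p ^ 2) ^ r * (p ^ 2) ^ r ^ 2 * rogersSelbergAlpha p r = jacobiAlpha (p ^ 2) (p ^ 5) r := by
  rw [rogersSelbergAlpha, ← mul_assoc, pow_mul_thetaTerm, jacobiAlpha]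
  congr 2 <;> ring

theorem tsum_rogersSelberg {p : ℂ} (hp : ‖p‖ < 1) :
    ∑' n, (p ^ 2) ^ (n ^ 2 + n) / (qPoch (p ^ 2) (p ^ 2) n * qPoch (-p) p (2 * n)) =
      qPochInf (p ^ 2) (p ^ 7) * qPochInf (p ^ 5) (p ^ 7) * qPochInf (p ^ 7) (p ^ 7) /
        qPochInf (p ^ 2) (p ^ 2) := by
  have hp2 := norm_pow_lt_one hp two_ne_zero
  have hp7 : ‖p ^ 2 * p ^ 5‖ < 1 := by
    rw [← pow_add]
    exact norm_pow_lt_one hp (by norm_num)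
  have hfactor : 1 - p ^ 2 ≠ 0 := by simpa using sub_ne_zero.mpr (mul_pow_ne_one hp2 hp2 0).symm
  have hbailey := tsum_mul_baileyBeta (α := rogersSelbergAlpha p) hp2
    (mul_self_mul_pow_ne_one hp2) (by
      simpa only [pow_mul_rogersSelbergAlpha] using summable_norm_jacobiAlpha hp7)
  simp only [pow_mul_rogersSelbergAlpha, tsum_jacobiAlpha hp7, baileyBeta_rogersSelbergAlpha hp]
    at hbailey
  refine mul_left_cancel₀ hfactor ?_
  rw [qPochInf_eq_one_sub_mul (p ^ 2) hp2, mul_div_assoc', mul_div_mul_left _ _ hfactor,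
    show p ^ 7 = p ^ 2 * p ^ 5 by ring, ← hbailey, ← tsum_mul_left]
  exact tsum_congr fun n ↦ by ring

lemma pow_mul_rogersAlpha_two_mul (q : ℂ) (k : ℕ) :
    q ^ (2 * k) * q ^ (2 * k) ^ 2 * rogersAlpha q (2 * k) =
      thetaTerm (q ^ 12) (q ^ 2 * q ^ 12) k := by
  have hshift := pow_mul_thetaTerm (q ^ 2) (q ^ 4) (q ^ 6) (q ^ 6) k
  rw [show q ^ 2 * q ^ 4 * q ^ 6 = q ^ 12 by ring,
    show (q ^ 4) ^ 2 * q ^ 6 = q ^ 2 * q ^ 12 by ring] at hshift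
  rw [rogersAlpha_two_mul, ← hshift]
  ring

lemma pow_mul_rogersAlpha_two_mul_add_one (q : ℂ) (k : ℕ) :
    q ^ (2 * k + 1) * q ^ (2 * k + 1) ^ 2 * rogersAlpha q (2 * k + 1) =
      -(q ^ 2) ^ (2 * k + 1) * thetaTerm (q ^ 12) (q ^ 2 * q ^ 12) k := by
  rw [← pow_mul_rogersAlpha_two_mul, rogersAlpha_two_mul_add_one, rogersAlpha_two_mul]
  ring

lemma summable_norm_pow_mul_rogersAlpha {q : ℂ} (hq : ‖q‖ < 1) :
    Summable fun s ↦ ‖q ^ s * q ^ s ^ 2 * rogersAlpha q s‖ := by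
  have hbase : ‖q ^ 2 * q ^ 12‖ < 1 := by
    rw [← pow_add]
    exact norm_pow_lt_one hq (by norm_num)
  have heven := summable_norm_thetaTerm (q ^ 12) hbase
  have hodd : Summable fun k ↦ ‖-(q ^ 2) ^ (2 * k + 1) * thetaTerm (q ^ 12) (q ^ 2 * q ^ 12) k‖ :=
    heven.of_nonneg_of_le (fun k ↦ norm_nonneg _) fun k ↦ by
      rw [norm_mul, norm_neg, norm_pow]
      exact mul_le_of_le_one_left (norm_nonneg _)
        (pow_le_one₀ (norm_nonneg _) (norm_pow_lt_one hq two_ne_zero).le)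
  simp only [← pow_mul_rogersAlpha_two_mul_add_one] at hodd
  simp only [← pow_mul_rogersAlpha_two_mul] at heven
  exact heven.even_add_odd hodd

lemma tsum_pow_mul_rogersAlpha {q : ℂ} (hq : ‖q‖ < 1) :
    ∑' s, q ^ s * q ^ s ^ 2 * rogersAlpha q s = ∑' k, jacobiAlpha (q ^ 2) (q ^ 12) k := by
  have hsum := (summable_norm_pow_mul_rogersAlpha hq).of_norm
  rw [tsum_eq_tsum_two_mul_add hsum,
    ← (summable_comp_two_mul hsum).tsum_add (summable_comp_two_mul_add_one hsum)]
  refine tsum_congr fun k ↦ ?_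
  rw [pow_mul_rogersAlpha_two_mul, pow_mul_rogersAlpha_two_mul_add_one, jacobiAlpha]
  ring

theorem tsum_rogers {q : ℂ} (hq : ‖q‖ < 1) :
    ∑' n, q ^ (n ^ 2 + 2 * n) / (qPoch q q n * qPoch q (q ^ 2) (n + 1)) =
      qPochInf (q ^ 2) (q ^ 14) * qPochInf (q ^ 12) (q ^ 14) * qPochInf (q ^ 14) (q ^ 14) /
        qPochInf q q := by
  have hbase : ‖q ^ 2 * q ^ 12‖ < 1 := by
    rw [← pow_add]
    exact norm_pow_lt_one hq (by norm_num)
  have hfactor : 1 - q ≠ 0 := by simpa using sub_ne_zero.mpr (mul_pow_ne_one hq hq 0).symm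
  have hbailey := tsum_mul_baileyBeta hq (mul_self_mul_pow_ne_one hq)
    (summable_norm_pow_mul_rogersAlpha hq)
  simp only [tsum_pow_mul_rogersAlpha hq, tsum_jacobiAlpha hbase, baileyBeta_rogersAlpha hq]
    at hbailey
  refine mul_left_cancel₀ hfactor ?_
  rw [qPochInf_eq_one_sub_mul q hq, mul_div_assoc', mul_div_mul_left _ _ hfactor,
    show q ^ 14 = q ^ 2 * q ^ 12 by ring, ← hbailey, ← tsum_mul_left]
  exact tsum_congr fun n ↦ by ring

end RogersSlater

section EtaQuotients

variable {q : ℂ}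

lemma qPochInf_pow_ne_zero (hq : ‖q‖ < 1) {k m : ℕ} (hk : k ≠ 0) (hm : m ≠ 0) :
    qPochInf (q ^ k) (q ^ m) ≠ 0 :=
  have hqm := norm_pow_lt_one hq hm
  qPochInf_ne_zero hqm (mul_pow_ne_one hqm (norm_pow_lt_one hq hk))

lemma qPochInf_pow_eq_mul (hq : ‖q‖ < 1) (k : ℕ) {m : ℕ} (hm : m ≠ 0) :
    qPochInf (q ^ k) (q ^ m) =
      qPochInf (q ^ k) (q ^ (2 * m)) * qPochInf (q ^ (k + m)) (q ^ (2 * m)) := by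
  rw [qPochInf_eq_mul_sq _ (norm_pow_lt_one hq hm), ← pow_mul, mul_comm m, pow_add]

lemma qPochInf_pow_mul_qPochInf_neg_pow (hq : ‖q‖ < 1) (k : ℕ) {m : ℕ} (hm : m ≠ 0) :
    qPochInf (q ^ k) (q ^ m) * qPochInf (-q ^ k) (q ^ m) =
      qPochInf (q ^ (2 * k)) (q ^ (2 * m)) := by
  rw [qPochInf_mul_qPochInf_neg _ (norm_pow_lt_one hq hm), ← pow_mul, ← pow_mul, mul_comm k,
    mul_comm m]

lemma J_ne_zero (hq : ‖q‖ < 1) {m : ℕ} (hm : m ≠ 0) : J q m ≠ 0 := qPochInf_pow_ne_zero hq hm hm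

lemma qPochInf_neg_sq_sq (hq : ‖q‖ < 1) : qPochInf (-q ^ 2) (q ^ 2) = J q 4 / J q 2 := by
  rw [eq_div_iff (J_ne_zero hq two_ne_zero), mul_comm]
  exact qPochInf_pow_mul_qPochInf_neg_pow hq 2 two_ne_zero

lemma qPochInf_neg_sq (hq : ‖q‖ < 1) :
    qPochInf (-q) (q ^ 2) = J q 2 ^ 2 / (J q 1 * J q 4) := by
  have hJ1 : J q 1 = qPochInf q (q ^ 2) * J q 2 := by
    simpa [J] using qPochInf_pow_eq_mul hq 1 one_ne_zero
  have hJ2 : J q 2 = qPochInf (q ^ 2) (q ^ 4) * J q 4 := qPochInf_pow_eq_mul hq 2 two_ne_zero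
  have hneg : qPochInf q (q ^ 2) * qPochInf (-q) (q ^ 2) = qPochInf (q ^ 2) (q ^ 4) := by
    simpa using qPochInf_pow_mul_qPochInf_neg_pow hq 1 two_ne_zero
  rw [eq_div_iff (mul_ne_zero (J_ne_zero hq one_ne_zero) (J_ne_zero hq four_ne_zero)), hJ1]
  linear_combination J q 2 * J q 4 * hneg - J q 2 * hJ2

lemma rogersSelberg_product_neg_eq (hq : ‖q‖ < 1) :
    qPochInf (q ^ 2) (-q ^ 7) * qPochInf (-q ^ 5) (-q ^ 7) * qPochInf (-q ^ 7) (-q ^ 7) /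
        qPochInf (q ^ 2) (q ^ 2) =
      qPochInf (-q ^ 5) (q ^ 14) * qPochInf (-q ^ 7) (q ^ 14) * qPochInf (-q ^ 9) (q ^ 14) /
        (qPochInf (q ^ 4) (q ^ 14) * qPochInf (q ^ 6) (q ^ 14) * qPochInf (q ^ 8) (q ^ 14) *
          qPochInf (q ^ 10) (q ^ 14)) := by
  have hbase : ‖-q ^ 7‖ < 1 := (norm_neg _).trans_lt (norm_pow_lt_one hq (by norm_num))
  have hne (k : ℕ) (hk : k ≠ 0) : qPochInf (q ^ k) (q ^ 14) ≠ 0 :=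
    qPochInf_pow_ne_zero hq hk (by norm_num)
  have hresidues : qPochInf (q ^ 2) (q ^ 2) =
      ∏ i ∈ range 7, qPochInf (q ^ (2 + 2 * i)) (q ^ 14) := by
    simp only [qPochInf_eq_prod_residues _ (norm_pow_lt_one hq two_ne_zero) 7, ← pow_mul, ← pow_add]
  rw [qPochInf_eq_mul_sq (q ^ 2) hbase, qPochInf_eq_mul_sq (-q ^ 5) hbase,
    qPochInf_eq_mul_sq (-q ^ 7) hbase, hresidues,
    show (-q ^ 7) ^ 2 = q ^ 14 by ring, show q ^ 2 * -q ^ 7 = -q ^ 9 by ring,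
    show -q ^ 5 * -q ^ 7 = q ^ 12 by ring, show -q ^ 7 * -q ^ 7 = q ^ 14 by ring]
  simp only [prod_range_succ, prod_range_zero, Nat.reduceMul, Nat.reduceAdd, one_mul]
  have h2 := hne 2 (by norm_num)
  have h12 := hne 12 (by norm_num)
  have h14 := hne 14 (by norm_num)
  field_simp

lemma rogersSelberg_product_neg_eq_Jam (hq : ‖q‖ < 1) :
    qPochInf (q ^ 2) (-q ^ 7) * qPochInf (-q ^ 5) (-q ^ 7) * qPochInf (-q ^ 7) (-q ^ 7) /
        qPochInf (q ^ 2) (q ^ 2) =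
      J q 14 * J q 28 ^ 5 /
        (Jam q 4 28 * Jam q 5 28 * Jam q 6 28 * Jam q 7 28 * Jam q 8 28 * Jam q 9 28) := by
  have hne (k : ℕ) (hk : k ≠ 0) : qPochInf (q ^ k) (q ^ 28) ≠ 0 :=
    qPochInf_pow_ne_zero hq hk (by norm_num)
  have hsplit (k : ℕ) : qPochInf (q ^ k) (q ^ 14) =
      qPochInf (q ^ k) (q ^ 28) * qPochInf (q ^ (k + 14)) (q ^ 28) :=
    qPochInf_pow_eq_mul hq k (m := 14) (by norm_num)
  have hneg (k : ℕ) (hk : k ≠ 0) : qPochInf (-q ^ k) (q ^ 14) = qPochInf (q ^ (2 * k)) (q ^ 28) /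
      (qPochInf (q ^ k) (q ^ 28) * qPochInf (q ^ (k + 14)) (q ^ 28)) := by
    rw [eq_div_iff (mul_ne_zero (hne k hk) (hne _ (by lia))), ← hsplit, mul_comm]
    exact qPochInf_pow_mul_qPochInf_neg_pow hq k (m := 14) (by norm_num)
  rw [rogersSelberg_product_neg_eq hq, hneg 5 (by norm_num), hneg 7 (by norm_num),
    hneg 9 (by norm_num), div_mul_div_comm, div_mul_div_comm, div_div]
  simp only [J, Jam, hsplit, Nat.reduceMul, Nat.reduceAdd, Nat.reduceSub]
  rw [div_eq_div_iff (by simp [hne]) (by simp [hne])]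
  ring

end EtaQuotients

section QuadrupleSum

variable {q : ℂ}

/-- The exponent of `q` in the quadruple sum. -/
def quadExponent (i j k l : ℤ) : ℤ := i ^ 2 + j ^ 2 + k ^ 2 + l ^ 2 + i * l - j * l - k * l + l

/-- The summand of the quadruple sum. -/
noncomputable def quadTerm (q : ℂ) (i j k l : ℕ) : ℂ :=
  q ^ quadExponent i j k l / (qPoch (q ^ 2) (q ^ 2) i * qPoch (q ^ 2) (q ^ 2) j *
    qPoch (q ^ 2) (q ^ 2) k * qPoch (q ^ 2) (q ^ 2) l)

lemma add_le_four_mul_quadExponent (i j k l : ℕ) :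
    ((i + j + k + l : ℕ) : ℤ) ≤ 4 * quadExponent i j k l := by
  have hi := Int.le_self_sq i
  have hj := Int.le_self_sq j
  have hk := Int.le_self_sq k
  have hil : 0 ≤ (i : ℤ) * l := by positivity
  push_cast [quadExponent]
  nlinarith [sq_nonneg (3 * j - 2 * l : ℤ), sq_nonneg (3 * k - 2 * l : ℤ)]

lemma norm_zpow_quadExponent_le (hq0 : q ≠ 0) (hq : ‖q‖ < 1) :
    ∃ t : ℝ, 0 < t ∧ t < 1 ∧ ∀ i j k l : ℕ, ‖q ^ quadExponent i j k l‖ ≤ t ^ (i + j + k + l) := by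
  have hnorm := norm_pos_iff.mpr hq0
  refine ⟨‖q‖ ^ (4⁻¹ : ℝ), by positivity, Real.rpow_lt_one hnorm.le hq (by norm_num),
    fun i j k l ↦ ?_⟩
  rw [norm_zpow, ← Real.rpow_natCast, ← Real.rpow_intCast, ← Real.rpow_mul hnorm.le]
  refine Real.rpow_le_rpow_of_exponent_ge hnorm hq.le ?_
  have := add_le_four_mul_quadExponent i j k l
  rify at this
  push_cast
  linarith

lemma summable_quadTerm (hq0 : q ≠ 0) (hq : ‖q‖ < 1) :
    Summable fun x : ℕ × ℕ × ℕ × ℕ ↦ quadTerm q x.2.1 x.2.2.1 x.2.2.2 x.1 := by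
  have hq2 := norm_pow_lt_one hq two_ne_zero
  obtain ⟨C, hC0, hC⟩ := exists_norm_inv_qPoch_le hq2 (mul_pow_ne_one hq2 hq2)
  obtain ⟨t, ht0, ht1, ht⟩ := norm_zpow_quadExponent_le hq0 hq
  have hgeom : Summable fun n : ℕ ↦ ‖C * t ^ n‖ :=
    ((summable_geometric_of_lt_one ht0.le ht1).mul_left C).norm
  refine (hgeom.mul_norm (hgeom.mul_norm (hgeom.mul_norm hgeom))).of_norm_bounded ?_
  rintro ⟨l, i, j, k⟩
  calc ‖quadTerm q i j k l‖
      ≤ t ^ (i + j + k + l) * (C * C * C * C) := by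
        rw [quadTerm, div_eq_mul_inv, mul_inv, mul_inv, mul_inv]
        simp only [norm_mul]
        gcongr
        exacts [ht i j k l, hC i, hC j, hC k, hC l]
    _ = C * t ^ l * (C * t ^ i * (C * t ^ j * (C * t ^ k))) := by ring
    _ = ‖C * t ^ l * (C * t ^ i * (C * t ^ j * (C * t ^ k)))‖ :=
        (Real.norm_of_nonneg (by positivity)).symm

/-- The sum of `quadTerm` over `i`, `j`, `k`, as given by Euler's expansion. -/
noncomputable def tripleSum (q : ℂ) (l : ℕ) : ℂ :=
  q ^ (l ^ 2 + l) / qPoch (q ^ 2) (q ^ 2) l *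
    (qPochInf (-(q ^ l * q)) (q ^ 2) * qPochInf (-((q ^ l)⁻¹ * q)) (q ^ 2) ^ 2)

lemma quadTerm_eq_mul_eulerTerm (hq0 : q ≠ 0) (i j k l : ℕ) :
    quadTerm q i j k l = q ^ (l ^ 2 + l) / qPoch (q ^ 2) (q ^ 2) l *
      (eulerTerm (-(q ^ l * q)) (q ^ 2) i * (eulerTerm (-((q ^ l)⁻¹ * q)) (q ^ 2) j *
        eulerTerm (-((q ^ l)⁻¹ * q)) (q ^ 2) k)) := by
  have hexponent : quadExponent i j k l =
      ((l ^ 2 + l + i ^ 2 + l * i + j ^ 2 + k ^ 2 : ℕ) : ℤ) - ((l * j + l * k : ℕ) : ℤ) := by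
    push_cast [quadExponent]
    ring
  simp only [eulerTerm, thetaTerm_neg_mul_sq, quadTerm]
  rw [hexponent, zpow_sub₀ hq0, zpow_natCast, zpow_natCast, inv_pow, inv_pow]
  simp only [pow_add, pow_mul, div_eq_mul_inv, mul_inv]
  ring

lemma hasSum_quadTerm (hq0 : q ≠ 0) (hq : ‖q‖ < 1) (l : ℕ) :
    HasSum (fun x : ℕ × ℕ × ℕ ↦ quadTerm q x.1 x.2.1 x.2.2 l) (tripleSum q l) := by
  have hq2 := norm_pow_lt_one hq two_ne_zero
  have hi := summable_norm_eulerTerm (-(q ^ l * q)) hq2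
  have hj := summable_norm_eulerTerm (-((q ^ l)⁻¹ * q)) hq2
  simp only [quadTerm_eq_mul_eulerTerm hq0]
  have hsum := ((summable_mul_of_summable_norm hi (hj.mul_norm hj)).mul_left
    (q ^ (l ^ 2 + l) / qPoch (q ^ 2) (q ^ 2) l)).hasSum
  rwa [tsum_mul_left, ← tsum_mul_tsum_of_summable_norm hi (hj.mul_norm hj),
    ← tsum_mul_tsum_of_summable_norm hj hj, tsum_eulerTerm _ hq2, tsum_eulerTerm _ hq2, ← sq]
    at hsum

lemma hasSum_tripleSum (hq0 : q ≠ 0) (hq : ‖q‖ < 1) :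
    HasSum (tripleSum q)
      (∑' x : ℕ × ℕ × ℕ × ℕ, quadTerm q x.1 x.2.1 x.2.2.1 x.2.2.2) := by
  let e : ℕ × ℕ × ℕ × ℕ ≃ ℕ × ℕ × ℕ × ℕ :=
    ⟨fun x ↦ (x.2.1, x.2.2.1, x.2.2.2, x.1), fun x ↦ (x.2.2.2, x.1, x.2.1, x.2.2.1),
      fun _ ↦ rfl, fun _ ↦ rfl⟩
  rw [← e.tsum_eq]
  exact (summable_quadTerm hq0 hq).hasSum.prod_fiberwise (hasSum_quadTerm hq0 hq)

lemma tripleSum_two_mul (hq0 : q ≠ 0) (hq : ‖q‖ < 1) (m : ℕ) :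
    tripleSum q (2 * m) = qPochInf (-q) (q ^ 2) ^ 3 *
      ((q ^ 2) ^ (m ^ 2 + m) / (qPoch (q ^ 2) (q ^ 2) m * qPoch q (-q) (2 * m))) := by
  have hq2 := norm_pow_lt_one hq two_ne_zero
  have hreflect := qPochInf_mul_pow_mul_qPochInf_mul_inv_pow_sq hq2 (pow_ne_zero 2 hq0)
    (show -q * -q = q ^ 2 by ring) m
  have htheta : thetaTerm (-q) (q ^ 2) m = q ^ m ^ 2 := by simpa using thetaTerm_neg_mul_sq 1 q m
  have hdenom := qPoch_mul_qPoch_sq_mul_qPoch_neg (-q) m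
  rw [neg_sq, neg_neg] at hdenom
  have hne : qPoch (-q) (q ^ 2) m ≠ 0 :=
    qPoch_ne_zero (mul_pow_ne_one hq2 ((norm_neg q).trans_lt hq)) m
  have hupper : -(q ^ (2 * m) * q) = -q * (q ^ 2) ^ m := by ring
  have hlower : -((q ^ (2 * m))⁻¹ * q) = -q * ((q ^ 2) ^ m)⁻¹ := by ring
  calc tripleSum q (2 * m)
      = (q ^ 2) ^ (m ^ 2 + m) / qPoch (q ^ 2) (q ^ 2) (2 * m) *
          (qPochInf (-q * (q ^ 2) ^ m) (q ^ 2) *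
            (qPochInf (-q * ((q ^ 2) ^ m)⁻¹) (q ^ 2) * thetaTerm (-q) (q ^ 2) m) ^ 2) := by
        rw [tripleSum, hupper, hlower, htheta]
        ring
    _ = _ := by
        rw [hreflect, ← hdenom, mul_assoc, div_mul_eq_mul_div, mul_left_comm,
          mul_div_mul_left _ _ hne]
        ring

lemma tripleSum_two_mul_add_one (hq0 : q ≠ 0) (hq : ‖q‖ < 1) (m : ℕ) :
    tripleSum q (2 * m + 1) = 4 * q ^ 2 * qPochInf (-q ^ 2) (q ^ 2) ^ 3 *
      ((q ^ 2) ^ (m ^ 2 + 2 * m) /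
        (qPoch (q ^ 2) (q ^ 2) m * qPoch (q ^ 2) ((q ^ 2) ^ 2) (m + 1))) := by
  have hq2 := norm_pow_lt_one hq two_ne_zero
  have hreflect := qPochInf_mul_pow_mul_qPochInf_mul_inv_pow_sq hq2 (pow_ne_zero 2 hq0)
    (show -1 * -q ^ 2 = q ^ 2 by ring) m
  rw [show qPochInf (-1) (q ^ 2) = 2 * qPochInf (-q ^ 2) (q ^ 2) by
    rw [qPochInf_eq_one_sub_mul _ hq2]; norm_num] at hreflect
  have htheta : thetaTerm (-q ^ 2) (q ^ 2) m = q ^ m * q ^ m ^ 2 := by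
    rw [← thetaTerm_neg_mul_sq, sq]
  have hne : qPoch (-q ^ 2) (q ^ 2) m ≠ 0 :=
    qPoch_ne_zero (mul_pow_ne_one hq2 ((norm_neg _).trans_lt hq2)) m
  have hupper : -(q ^ (2 * m + 1) * q) = -q ^ 2 * (q ^ 2) ^ m := by ring
  have hlower : -((q ^ (2 * m + 1))⁻¹ * q) = -1 * ((q ^ 2) ^ m)⁻¹ := by
    field_simp
    ring
  calc tripleSum q (2 * m + 1)
      = q ^ 2 * (q ^ 2) ^ (m ^ 2 + 2 * m) / qPoch (q ^ 2) (q ^ 2) (2 * m + 1) *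
          (qPochInf (-q ^ 2 * (q ^ 2) ^ m) (q ^ 2) *
            (qPochInf (-1 * ((q ^ 2) ^ m)⁻¹) (q ^ 2) * thetaTerm (-q ^ 2) (q ^ 2) m) ^ 2) := by
        rw [tripleSum, hupper, hlower, htheta]
        ring
    _ = _ := by
        rw [hreflect, ← qPoch_mul_qPoch_odd_mul_qPoch_neg, mul_assoc (qPoch (-q ^ 2) (q ^ 2) m),
          div_mul_eq_mul_div, mul_left_comm, mul_comm _ (qPoch (-q ^ 2) (q ^ 2) m),
          mul_div_mul_left _ _ hne]
        ring

lemma tsum_tripleSum_two_mul (hq0 : q ≠ 0) (hq : ‖q‖ < 1) :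
    ∑' m, tripleSum q (2 * m) = J q 2 ^ 6 * J q 14 * J q 28 ^ 5 /
      (J q 1 ^ 3 * J q 4 ^ 3 * Jam q 4 28 * Jam q 5 28 * Jam q 6 28 * Jam q 7 28 * Jam q 8 28 *
        Jam q 9 28) := by
  have hsum := tsum_rogersSelberg ((norm_neg q).trans_lt hq)
  rw [neg_sq, neg_neg, Odd.neg_pow (by decide : Odd 5), Odd.neg_pow (by decide : Odd 7),
    rogersSelberg_product_neg_eq_Jam hq] at hsum
  simp only [tripleSum_two_mul hq0 hq, tsum_mul_left, hsum, qPochInf_neg_sq hq]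
  rw [div_pow, div_mul_div_comm]
  ring

lemma tsum_tripleSum_two_mul_add_one (hq0 : q ≠ 0) (hq : ‖q‖ < 1) :
    ∑' m, tripleSum q (2 * m + 1) = 4 * q ^ 2 * J q 4 ^ 3 * Jam q 4 28 / J q 2 ^ 4 := by
  have hsum := tsum_rogers (norm_pow_lt_one hq two_ne_zero)
  have hproduct : qPochInf ((q ^ 2) ^ 2) ((q ^ 2) ^ 14) * qPochInf ((q ^ 2) ^ 12) ((q ^ 2) ^ 14) *
      qPochInf ((q ^ 2) ^ 14) ((q ^ 2) ^ 14) / qPochInf (q ^ 2) (q ^ 2) =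
      Jam q 4 28 / J q 2 := by
    simp only [Jam, J, ← pow_mul, Nat.reduceMul, Nat.reduceSub]
  rw [hproduct] at hsum
  simp only [tripleSum_two_mul_add_one hq0 hq, tsum_mul_left, hsum, qPochInf_neg_sq_sq hq]
  rw [div_pow, mul_assoc, div_mul_div_comm]
  ring

end QuadrupleSum

theorem stmt_15 (q : ℂ) (h0 : 0 < ‖q‖) (h1 : ‖q‖ < 1) :
    (∑' p : ℕ × ℕ × ℕ × ℕ,
      (fun (i j k l : ℕ) =>
        q ^ (((i:ℤ)^2 + (j:ℤ)^2 + (k:ℤ)^2 + (l:ℤ)^2 + (i:ℤ)*(l:ℤ) - (j:ℤ)*(l:ℤ) - (k:ℤ)*(l:ℤ) + (l:ℤ)) : ℤ) /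
          (qPoch (q ^ 2) (q ^ 2) i * qPoch (q ^ 2) (q ^ 2) j * qPoch (q ^ 2) (q ^ 2) k * qPoch (q ^ 2) (q ^ 2) l))
        p.1 p.2.1 p.2.2.1 p.2.2.2)
    = (J q 2)^6 * J q 14 * (J q 28)^5 /
        ((J q 1)^3 * (J q 4)^3 * Jam q 4 28 * Jam q 5 28 * Jam q 6 28 *
          Jam q 7 28 * Jam q 8 28 * Jam q 9 28)
      + 4 * q^2 * (J q 4)^3 * Jam q 4 28 / (J q 2)^4 := by
  have hq0 := norm_pos_iff.mp h0
  have hsum := hasSum_tripleSum hq0 h1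
  rw [← tsum_tripleSum_two_mul hq0 h1, ← tsum_tripleSum_two_mul_add_one hq0 h1,
    ← tsum_eq_tsum_two_mul_add hsum.summable, hsum.tsum_eq]
  rfl
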